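/- Let s>7/2 be an integer and α a multi-index with |α|≤s. There is a constant C, depending only on s and an upper bound K for ‖ρ⁰‖_{H^s(𝕋³)}, such that for all N∈H^s(𝕋³) and U∈H^s(𝕋³;ℝ³): ‖∂^α_x((N+ρ⁰)div U) − (N+ρ⁰)∂^α_x div U‖_{L²(𝕋³)} ≤ C(‖(N,U)‖²_{H^s} + ‖(N,U)‖_{H^s}). -/

import Mathlib

open MeasureTheory Real
open scoped ENNReal

noncomputable section

/-! ### Basic setup: periodic fields on the torus `𝕋³ = (ℝ/2πℤ)³`

Functions on the torus are modelled as `2π`-periodic functions on `ℝ³`,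
with all integrals (`L²` and `H^s` norms, inner products) taken over the
fundamental cube `Q3 = [0,2π]³`. -/

/-- A point of space `ℝ³`. -/
abbrev Pt : Type := Fin 3 → ℝ

/-- Scalar fields. -/
abbrev SF : Type := Pt → ℝ

/-- Vector fields, componentwise. -/
abbrev VF : Type := Fin 3 → SF

/-- The fundamental cube `[0,2π]³` of the torus. -/
def Q3 : Set Pt := Set.univ.pi fun _ => Set.Icc 0 (2 * π)

/-- `2π`-periodicity in each coordinate: such a function descends to `𝕋³`. -/
def PerS (f : SF) : Prop := ∀ (x : Pt) (i : Fin 3), f (x + Pi.single i (2 * π)) = f x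

/-- Componentwise periodicity of a vector field. -/
def PerV (v : VF) : Prop := ∀ i, PerS (v i)

/-- SmoothS scalar field (proxy for membership in the Sobolev spaces `H^k(𝕋³)`,
together with periodicity). -/
abbrev SmoothS (f : SF) : Prop := ContDiff ℝ (⊤ : ℕ∞) f

/-- SmoothS vector field. -/
abbrev SmoothV (v : VF) : Prop := ∀ i, ContDiff ℝ (⊤ : ℕ∞) (v i)

/-- Partial derivative `∂_i`. -/
def pd (i : Fin 3) (f : SF) : SF := fun x => fderiv ℝ f x (Pi.single i 1)

/-- Iterated partial derivative in a fixed direction. -/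
def pdIter (i : Fin 3) : ℕ → SF → SF
  | 0, f => f
  | n + 1, f => pd i (pdIter i n f)

/-- The spatial derivative `∂^α_x` for a multi-index `α`. -/
def mderiv (α : Fin 3 → ℕ) (f : SF) : SF :=
  pdIter 0 (α 0) (pdIter 1 (α 1) (pdIter 2 (α 2) f))

/-- `∂^α_x` of a vector field, componentwise. -/
def mderivV (α : Fin 3 → ℕ) (v : VF) : VF := fun i => mderiv α (v i)

/-- `L²(𝕋³)` norm of a scalar field. -/
def L2 (f : SF) : ℝ := (∫ x in Q3, (f x) ^ 2) ^ (1/2 : ℝ)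

/-- `L²(𝕋³)` norm of a vector field. -/
def L2V (v : VF) : ℝ := (∫ x in Q3, ∑ i, (v i x) ^ 2) ^ (1/2 : ℝ)

/-- `L²(𝕋³)` inner product of scalar fields. -/
def ip (f g : SF) : ℝ := ∫ x in Q3, f x * g x

/-- `L²(𝕋³)` inner product of vector fields. -/
def ipV (v w : VF) : ℝ := ∫ x in Q3, ∑ i, v i x * w i x

/-- The finite set of multi-indices `α` with `|α| ≤ s`. -/
def midx (s : ℕ) : Finset (Fin 3 → ℕ) :=
  (Fintype.piFinset fun _ => Finset.range (s + 1)).filter fun α => (∑ i, α i) ≤ s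

/-- `H^s(𝕋³)` norm of a scalar field. -/
def HsNorm (s : ℕ) (f : SF) : ℝ := (∑ α ∈ midx s, (L2 (mderiv α f)) ^ 2) ^ (1/2 : ℝ)

/-- `H^s(𝕋³)` norm of a vector field. -/
def HsNormV (s : ℕ) (v : VF) : ℝ := (∑ i, (HsNorm s (v i)) ^ 2) ^ (1/2 : ℝ)

/-! ### Differential operators -/

/-- Gradient of a scalar field. -/
def grad (f : SF) : VF := fun i => pd i f

/-- Divergence of a vector field. -/
def divv (v : VF) : SF := fun x => ∑ i, pd i (v i) x

/-- Laplacian of a scalar field. -/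
def lap (f : SF) : SF := fun x => ∑ i, pd i (pd i f) x

/-- Curl of a vector field. -/
def curl (v : VF) : VF :=
  ![fun x => pd 1 (v 2) x - pd 2 (v 1) x,
    fun x => pd 2 (v 0) x - pd 0 (v 2) x,
    fun x => pd 0 (v 1) x - pd 1 (v 0) x]

/-- Cross product of vector fields. -/
def cross (a b : VF) : VF :=
  ![fun x => a 1 x * b 2 x - a 2 x * b 1 x,
    fun x => a 2 x * b 0 x - a 0 x * b 2 x,
    fun x => a 0 x * b 1 x - a 1 x * b 0 x]

/-- Pointwise dot product of vector fields. -/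
def vdot (a b : VF) : SF := fun x => ∑ i, a i x * b i x

/-- Pointwise squared Euclidean norm `|a|²` of a vector field. -/
def normSq (a : VF) : SF := fun x => ∑ i, (a i x) ^ 2

/-- Convective derivative `(u·∇)f`. -/
def conv (u : VF) (f : SF) : SF := fun x => ∑ i, u i x * pd i f x

/-- Convective derivative `(u·∇)v` of a vector field, componentwise. -/
def convV (u v : VF) : VF := fun j => conv u (v j)

/-- Symmetric gradient `D(u) = (∇u + ∇uᵀ)/2`, entrywise. -/
def Dsym (u : VF) (i j : Fin 3) : SF := fun x => (pd j (u i) x + pd i (u j) x) / 2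

/-- Squared Frobenius norm `|D(u)|²`. -/
def DabsSq (u : VF) : SF := fun x => ∑ i, ∑ j, (Dsym u i j x) ^ 2

/-- Squared Frobenius norm `|∇v|²` of the Jacobian of a vector field. -/
def gradSq (v : VF) : SF := fun x => ∑ i, ∑ j, (pd j (v i) x) ^ 2

/-- Squared Euclidean norm `|∇f|²` of the gradient of a scalar field. -/
def gradSqS (f : SF) : SF := fun x => ∑ i, (pd i f x) ^ 2

/-- Viscous stress tensor `Ψ(u) = 2μ D(u) + λ (div u) I₃`, entrywise. -/
def Psi (μ lam : ℝ) (u : VF) (i j : Fin 3) : SF :=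
  fun x => 2 * μ * Dsym u i j x + lam * divv u x * (if i = j then 1 else 0)

/-- `div Ψ(u)`, componentwise. -/
def divPsi (μ lam : ℝ) (u : VF) : VF := fun i => fun x => ∑ j, pd j (Psi μ lam u i j) x

/-- The viscous dissipation `Ψ(u):∇u = 2μ|D(u)|² + λ(div u)²`. -/
def PsiColon (μ lam : ℝ) (u : VF) : SF :=
  fun x => ∑ i, ∑ j, Psi μ lam u i j x * pd j (u i) x

/-- Pointwise time derivative of a time-dependent scalar field. -/
def dt (f : ℝ → SF) : ℝ → SF := fun t x => deriv (fun τ => f τ x) t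

/-- Pointwise time derivative of a time-dependent vector field. -/
def dtV (v : ℝ → VF) : ℝ → VF := fun t i x => deriv (fun τ => v τ i x) t

/-- The time interval `[0, T)` for `T ∈ (0, +∞]`. -/
def Dom (T : ℝ≥0∞) : Set ℝ := {t : ℝ | 0 ≤ t ∧ ENNReal.ofReal t < T}

/-- Continuity in time with values in `H^k(𝕋³)` on a time set `D`
(the class `C⁰(D, H^k)`). -/
def ContHs (k : ℕ) (D : Set ℝ) (f : ℝ → SF) : Prop :=
  ∀ t₀ ∈ D, ∀ ε > (0:ℝ), ∃ δ > (0:ℝ), ∀ t ∈ D, |t - t₀| < δ →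
    HsNorm k (fun x => f t x - f t₀ x) < ε

/-- `C⁰(D, H^k)` for vector fields. -/
def ContHsV (k : ℕ) (D : Set ℝ) (v : ℝ → VF) : Prop := ∀ i, ContHs k D fun t => v t i

/-! ### The full compressible MHD system and the electromagnetic fluid system -/

/-- Classical solution of the full compressible MHD system
`∂_tρ + div(ρu) = 0`,
`ρ(∂_tu + u·∇u) + ∇(ρθ) = div Ψ(u) + curl H × H`,
`ρ(∂_tθ + u·∇θ) + ρθ div u = κΔθ + Ψ(u):∇u + |curl H|²`,
`∂_tH − curl(u×H) = −curl(curl H)`, `div H = 0`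
on the torus, on the time set `D` (all physical constants `𝔯 = c_V = σ = μ₀ = 1`). -/
structure IsMHDSol (μ lam κ : ℝ) (D : Set ℝ) (ρ θ : ℝ → SF) (u H : ℝ → VF) : Prop where
  perρ : ∀ t ∈ D, PerS (ρ t)
  perθ : ∀ t ∈ D, PerS (θ t)
  peru : ∀ t ∈ D, PerV (u t)
  perH : ∀ t ∈ D, PerV (H t)
  smρ : ∀ t ∈ D, SmoothS (ρ t)
  smθ : ∀ t ∈ D, SmoothS (θ t)
  smu : ∀ t ∈ D, SmoothV (u t)
  smH : ∀ t ∈ D, SmoothV (H t)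
  tdρ : ∀ (x : Pt), ∀ t ∈ D, DifferentiableAt ℝ (fun τ => ρ τ x) t
  tdθ : ∀ (x : Pt), ∀ t ∈ D, DifferentiableAt ℝ (fun τ => θ τ x) t
  tdu : ∀ (i : Fin 3) (x : Pt), ∀ t ∈ D, DifferentiableAt ℝ (fun τ => u τ i x) t
  tdH : ∀ (i : Fin 3) (x : Pt), ∀ t ∈ D, DifferentiableAt ℝ (fun τ => H τ i x) t
  mass : ∀ t ∈ D, ∀ x, dt ρ t x + divv (fun i y => ρ t y * u t i y) x = 0
  mom : ∀ t ∈ D, ∀ x, ∀ i,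
    ρ t x * (dtV u t i x + convV (u t) (u t) i x) + pd i (fun y => ρ t y * θ t y) x
      = divPsi μ lam (u t) i x + cross (curl (H t)) (H t) i x
  temp : ∀ t ∈ D, ∀ x,
    ρ t x * (dt θ t x + conv (u t) (θ t) x) + ρ t x * θ t x * divv (u t) x
      = κ * lap (θ t) x + PsiColon μ lam (u t) x + normSq (curl (H t)) x
  induction : ∀ t ∈ D, ∀ x, ∀ i,
    dtV H t i x - curl (cross (u t) (H t)) i x = - curl (curl (H t)) i x
  divH : ∀ t ∈ D, ∀ x, divv (H t) x = 0

/-- Classical solution of the electromagnetic fluid system with dielectric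
constant `ε > 0`:
`∂_tρ + div(ρu) = 0`,
`ρ(∂_tu + u·∇u) + ∇(ρθ) = div Ψ(u) + (E + u×H) × H`,
`ρ(∂_tθ + u·∇θ) + ρθ div u = κΔθ + Ψ(u):∇u + |E + u×H|²`,
`ε∂_tE − curl H + E + u×H = 0`,
`∂_tH + curl E = 0`, `div H = 0`
on the torus, on the time set `D`. -/
structure IsEMSol (μ lam κ eps : ℝ) (D : Set ℝ) (ρ θ : ℝ → SF) (u E H : ℝ → VF) : Prop where
  perρ : ∀ t ∈ D, PerS (ρ t)
  perθ : ∀ t ∈ D, PerS (θ t)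
  peru : ∀ t ∈ D, PerV (u t)
  perE : ∀ t ∈ D, PerV (E t)
  perH : ∀ t ∈ D, PerV (H t)
  smρ : ∀ t ∈ D, SmoothS (ρ t)
  smθ : ∀ t ∈ D, SmoothS (θ t)
  smu : ∀ t ∈ D, SmoothV (u t)
  smE : ∀ t ∈ D, SmoothV (E t)
  smH : ∀ t ∈ D, SmoothV (H t)
  tdρ : ∀ (x : Pt), ∀ t ∈ D, DifferentiableAt ℝ (fun τ => ρ τ x) t
  tdθ : ∀ (x : Pt), ∀ t ∈ D, DifferentiableAt ℝ (fun τ => θ τ x) t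
  tdu : ∀ (i : Fin 3) (x : Pt), ∀ t ∈ D, DifferentiableAt ℝ (fun τ => u τ i x) t
  tdE : ∀ (i : Fin 3) (x : Pt), ∀ t ∈ D, DifferentiableAt ℝ (fun τ => E τ i x) t
  tdH : ∀ (i : Fin 3) (x : Pt), ∀ t ∈ D, DifferentiableAt ℝ (fun τ => H τ i x) t
  mass : ∀ t ∈ D, ∀ x, dt ρ t x + divv (fun i y => ρ t y * u t i y) x = 0
  mom : ∀ t ∈ D, ∀ x, ∀ i,
    ρ t x * (dtV u t i x + convV (u t) (u t) i x) + pd i (fun y => ρ t y * θ t y) x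
      = divPsi μ lam (u t) i x
        + cross (fun j y => E t j y + cross (u t) (H t) j y) (H t) i x
  temp : ∀ t ∈ D, ∀ x,
    ρ t x * (dt θ t x + conv (u t) (θ t) x) + ρ t x * θ t x * divv (u t) x
      = κ * lap (θ t) x + PsiColon μ lam (u t) x
        + normSq (fun j y => E t j y + cross (u t) (H t) j y) x
  faraday : ∀ t ∈ D, ∀ x, ∀ i,
    eps * dtV E t i x - curl (H t) i x + E t i x + cross (u t) (H t) i x = 0
  ampere : ∀ t ∈ D, ∀ x, ∀ i, dtV H t i x + curl (E t) i x = 0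
  divH : ∀ t ∈ D, ∀ x, divv (H t) x = 0

/-- The electric field `E⁰ = curl H⁰ − u⁰ × H⁰` induced by the limiting MHD flow. -/
def Efield (u H : VF) : VF := fun i x => curl H i x - cross u H i x

/-- `(N,U,Θ,F,G)` solves the error system obtained by subtracting the full
compressible MHD equations (background solution `(ρ⁰,u⁰,θ⁰,H⁰)`, with induced
electric field `E⁰ = curl H⁰ − u⁰×H⁰`) from the `ε`-dielectric electromagnetic
fluid system: equivalently, `(ρ⁰+N, u⁰+U, θ⁰+Θ, E⁰+F, H⁰+G)` solves the
electromagnetic fluid system. -/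
def IsErrSol (μ lam κ eps : ℝ) (D : Set ℝ) (ρ0 θ0 : ℝ → SF) (u0 H0 : ℝ → VF)
    (N Θ : ℝ → SF) (U F G : ℝ → VF) : Prop :=
  IsEMSol μ lam κ eps D
    (fun t x => ρ0 t x + N t x) (fun t x => θ0 t x + Θ t x)
    (fun t i x => u0 t i x + U t i x)
    (fun t i x => Efield (u0 t) (H0 t) i x + F t i x)
    (fun t i x => H0 t i x + G t i x)

/-- The error-system energy `‖ℰ‖_s = ‖(N,U,Θ,G)‖_s` (sum of the `H^s` norms). -/
def Enorm (s : ℕ) (N Θ : SF) (U G : VF) : ℝ :=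
  HsNorm s N + HsNormV s U + HsNorm s Θ + HsNormV s G

/-- The squared `ε`-weighted energy `⫴ℰ⫴²_s = ‖ℰ‖²_s + ε‖F‖²_s`. -/
def EnormSq (s : ℕ) (eps : ℝ) (N Θ : SF) (U F G : VF) : ℝ :=
  (Enorm s N Θ U G) ^ 2 + eps * (HsNormV s F) ^ 2

end


/-! ### Helper lemmas: one-dimensional Sobolev inequality -/

theorem sob1d (h h' : ℝ → ℝ) (hd : ∀ t, HasDerivAt h (h' t) t) (hc : Continuous h') (x : ℝ)
    (hx : x ∈ Set.Icc 0 (2 * π)) :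
    h x ^ 2 ≤ 2 * ∫ t in (0:ℝ)..(2 * π), (h t ^ 2 + h' t ^ 2) := by
  have hpi := Real.two_le_pi
  have hch : Continuous h := continuous_iff_continuousAt.2 fun t => (hd t).continuousAt
  set J := ∫ t in (0:ℝ)..(2 * π), (h t ^ 2 + h' t ^ 2) with hJ
  have hcJ : Continuous fun t => h t ^ 2 + h' t ^ 2 := by fun_prop
  have key : ∀ y ∈ Set.Icc 0 (2 * π), h x ^ 2 ≤ h y ^ 2 + J := by
    intro y hy
    have h1 : ∫ t in y..x, 2 * h t * h' t = h x ^ 2 - h y ^ 2 := by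
      apply intervalIntegral.integral_eq_sub_of_hasDerivAt (f := fun t => h t ^ 2)
      · intro t _
        have h5 : HasDerivAt (fun t => h t ^ 2) _ t := (hd t).fun_pow 2
        have e : 2 * h t * h' t = ((2 : ℕ) : ℝ) * h t ^ (2 - 1) * h' t := by norm_num
        rw [e]
        exact h5
      · apply Continuous.intervalIntegrable
        fun_prop
    have h2 : ‖∫ t in y..x, 2 * h t * h' t‖ ≤ ∫ t in Set.uIoc y x, ‖2 * h t * h' t‖ :=
      intervalIntegral.norm_integral_le_integral_norm_uIoc
    have hsub : Set.uIoc y x ⊆ Set.Ioc 0 (2 * π) := by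
      intro t ht
      rw [Set.mem_uIoc] at ht
      rcases ht with ht | ht
      · exact ⟨lt_of_le_of_lt hy.1 ht.1, ht.2.trans hx.2⟩
      · exact ⟨lt_of_le_of_lt hx.1 ht.1, ht.2.trans hy.2⟩
    have hintJ : IntegrableOn (fun t => h t ^ 2 + h' t ^ 2) (Set.Ioc 0 (2 * π)) :=
      (hcJ.integrableOn_Icc).mono_set Set.Ioc_subset_Icc_self
    have hint2 : IntegrableOn (fun t => ‖2 * h t * h' t‖) (Set.Ioc 0 (2 * π)) :=
      ((by fun_prop : Continuous fun t => ‖2 * h t * h' t‖).integrableOn_Icc).mono_set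
        Set.Ioc_subset_Icc_self
    have h3 : ∫ t in Set.uIoc y x, ‖2 * h t * h' t‖ ≤ J := by
      rw [hJ, intervalIntegral.integral_of_le (by positivity)]
      calc ∫ t in Set.uIoc y x, ‖2 * h t * h' t‖
          ≤ ∫ t in Set.Ioc 0 (2 * π), ‖2 * h t * h' t‖ :=
            setIntegral_mono_set hint2 (Filter.Eventually.of_forall fun t => norm_nonneg _)
              hsub.eventuallyLE
        _ ≤ _ := by
            apply setIntegral_mono hint2 hintJ
            intro t
            simp only [Real.norm_eq_abs]
            rw [abs_le]
            constructor <;> nlinarith [sq_nonneg (h t + h' t), sq_nonneg (h t - h' t)]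
    rw [h1, Real.norm_eq_abs] at h2
    have := le_abs_self (h x ^ 2 - h y ^ 2)
    linarith
  have hi1 : ∫ y in (0:ℝ)..(2 * π), h x ^ 2 ≤ ∫ y in (0:ℝ)..(2 * π), (h y ^ 2 + J) := by
    apply intervalIntegral.integral_mono_on (by positivity)
    · simp
    · exact (by fun_prop : Continuous fun y => h y ^ 2 + J).intervalIntegrable _ _
    · exact key
  have hi2 : ∫ y in (0:ℝ)..(2 * π), h y ^ 2 ≤ J := by
    apply intervalIntegral.integral_mono_on (by positivity)
    · exact (by fun_prop : Continuous fun y => h y ^ 2).intervalIntegrable _ _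
    · exact hcJ.intervalIntegrable _ _
    · intro t _
      nlinarith [sq_nonneg (h' t)]
  have hJ0 : 0 ≤ J := by
    apply intervalIntegral.integral_nonneg (by positivity)
    intro t _
    positivity
  rw [intervalIntegral.integral_add
    ((by fun_prop : Continuous fun y => h y ^ 2).intervalIntegrable _ _) (by simp)] at hi1
  simp only [intervalIntegral.integral_const, smul_eq_mul, sub_zero] at hi1
  have : 2 * π * h x ^ 2 ≤ 2 * π * (2 * J) := by nlinarith
  exact le_of_mul_le_mul_left this (by positivity)

/-! ### Calculus of partial derivatives -/

theorem pd_smooth (i : Fin 3) {f : SF} (hf : SmoothS f) : SmoothS (pd i f) := by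
  unfold pd SmoothS
  exact (hf.fderiv_right (m := (⊤ : ℕ∞)) (by simp)).clm_apply contDiff_const

theorem pd_comm (i j : Fin 3) {f : SF} (hf : SmoothS f) : pd i (pd j f) = pd j (pd i f) := by
  have h2 : Differentiable ℝ (fderiv ℝ f) :=
    (hf.fderiv_right (m := 1) (by norm_cast)).differentiable (by simp)
  have key : ∀ (a b : Fin 3) (x : Pt), pd a (pd b f) x
      = fderiv ℝ (fderiv ℝ f) x (Pi.single a 1) (Pi.single b 1) := by
    intro a b x
    unfold pd
    rw [fderiv_clm_apply (h2 x) (by fun_prop)]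
    simp
  ext x
  rw [key, key]
  have hs : IsSymmSndFDerivAt ℝ f x :=
    (hf.contDiffAt).isSymmSndFDerivAt (by simp; norm_cast)
  exact hs _ _

theorem pd_add (i : Fin 3) {f g : SF} (hf : SmoothS f) (hg : SmoothS g) :
    pd i (f + g) = pd i f + pd i g := by
  ext x
  unfold pd
  rw [fderiv_add (hf.differentiable (by simp) x) (hg.differentiable (by simp) x)]
  simp

theorem pd_mul (i : Fin 3) {f g : SF} (hf : SmoothS f) (hg : SmoothS g) :
    pd i (f * g) = pd i f * g + f * pd i g := by
  ext x
  unfold pd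
  rw [fderiv_mul (hf.differentiable (by simp) x) (hg.differentiable (by simp) x)]
  simp
  ring

theorem pdIter_smooth (i : Fin 3) (n : ℕ) {f : SF} (hf : SmoothS f) : SmoothS (pdIter i n f) := by
  induction n with
  | zero => exact hf
  | succ n ih => exact pd_smooth i ih

theorem pdIter_comm (i j : Fin 3) (n : ℕ) {f : SF} (hf : SmoothS f) :
    pd j (pdIter i n f) = pdIter i n (pd j f) := by
  induction n with
  | zero => rfl
  | succ n ih =>
    simp only [pdIter]
    rw [pd_comm j i (pdIter_smooth i n hf), ih]

theorem pdIter_add (i : Fin 3) (n : ℕ) {f g : SF} (hf : SmoothS f) (hg : SmoothS g) :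
    pdIter i n (f + g) = pdIter i n f + pdIter i n g := by
  induction n with
  | zero => rfl
  | succ n ih =>
    simp only [pdIter]
    rw [ih, pd_add i (pdIter_smooth i n hf) (pdIter_smooth i n hg)]

theorem mderiv_smooth (α : Fin 3 → ℕ) {f : SF} (hf : SmoothS f) : SmoothS (mderiv α f) :=
  pdIter_smooth _ _ (pdIter_smooth _ _ (pdIter_smooth _ _ hf))

theorem mderiv_add (α : Fin 3 → ℕ) {f g : SF} (hf : SmoothS f) (hg : SmoothS g) :
    mderiv α (f + g) = mderiv α f + mderiv α g := by
  unfold mderiv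
  rw [pdIter_add _ _ hf hg, pdIter_add _ _ (pdIter_smooth _ _ hf) (pdIter_smooth _ _ hg),
    pdIter_add _ _ (pdIter_smooth _ _ (pdIter_smooth _ _ hf))
      (pdIter_smooth _ _ (pdIter_smooth _ _ hg))]

theorem mderiv_zero (f : SF) : mderiv 0 f = f := rfl

theorem mderiv_succ (α : Fin 3 → ℕ) (i : Fin 3) {f : SF} (hf : SmoothS f) :
    mderiv (α + Pi.single i 1) f = pd i (mderiv α f) := by
  have h2 := pdIter_smooth 2 (α 2) hf
  have h1 := pdIter_smooth 1 (α 1) h2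
  fin_cases i
  · simp [mderiv, pdIter]
  · simp [mderiv, pdIter]
    rw [pdIter_comm 0 1 _ h1]
  · simp [mderiv, pdIter]
    rw [pdIter_comm 0 2 _ h1, pdIter_comm 1 2 _ h2]

theorem mderiv_pd (α : Fin 3 → ℕ) (i : Fin 3) {f : SF} (hf : SmoothS f) :
    mderiv α (pd i f) = mderiv (α + Pi.single i 1) f := by
  rw [mderiv_succ α i hf]
  unfold mderiv
  rw [← pdIter_comm _ _ _ hf, ← pdIter_comm _ _ _ (pdIter_smooth _ _ hf),
    ← pdIter_comm _ _ _ (pdIter_smooth _ _ (pdIter_smooth _ _ hf))]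

theorem sum_add_single (α : Fin 3 → ℕ) (i : Fin 3) :
    ∑ j, (α + Pi.single i 1 : Fin 3 → ℕ) j = (∑ j, α j) + 1 := by
  simp [Finset.sum_add_distrib]

/-- Induction over multi-indices. -/
theorem midx_induction {P : (Fin 3 → ℕ) → Prop} (h0 : P 0)
    (hs : ∀ α i, P α → P (α + Pi.single i 1)) (α : Fin 3 → ℕ) : P α := by
  generalize hn : ∑ j, α j = n
  induction n generalizing α with
  | zero =>
    have : α = 0 := by
      ext j
      have := (Finset.sum_eq_zero_iff.1 hn) j (Finset.mem_univ j)
      simpa using this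
    rw [this]; exact h0
  | succ n ih =>
    have : ∃ i, α i ≠ 0 := by
      by_contra! hcon
      simp [hcon] at hn
    obtain ⟨i, hi⟩ := this
    have e : α = (α - Pi.single i 1) + Pi.single i 1 := by
      ext j
      by_cases hj : j = i
      · subst hj; simp; omega
      · simp [hj]
    rw [e]
    apply hs
    apply ih
    have := sum_add_single (α - Pi.single i 1) i
    rw [← e] at this
    omega

/-- Leibniz commutator expansion. -/
theorem leibniz (α : Fin 3 → ℕ) : ∃ L : List ((Fin 3 → ℕ) × (Fin 3 → ℕ)),
    (∀ p ∈ L, 1 ≤ ∑ j, p.1 j ∧ (∑ j, p.1 j) + ∑ j, p.2 j = ∑ j, α j) ∧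
    ∀ f g : SF, SmoothS f → SmoothS g →
      mderiv α (f * g) = f * mderiv α g + (L.map fun p => mderiv p.1 f * mderiv p.2 g).sum := by
  induction α using midx_induction with
  | h0 => exact ⟨[], by simp, by intro f g _ _; simp [mderiv_zero]⟩
  | hs α i ih =>
    obtain ⟨L, hL, hE⟩ := ih
    refine ⟨(Pi.single i 1, α) :: (L.map fun p => (p.1 + Pi.single i 1, p.2)) ++
      (L.map fun p => (p.1, p.2 + Pi.single i 1)), ?_, ?_⟩
    · intro p hp
      rw [sum_add_single]
      simp only [List.cons_append, List.mem_cons, List.mem_append, List.mem_map] at hp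
      rcases hp with rfl | ⟨q, hq, rfl⟩ | ⟨q, hq, rfl⟩
      · have := sum_add_single 0 i
        simp at this ⊢
        omega
      · have := hL q hq
        simp only [sum_add_single]
        omega
      · have := hL q hq
        simp only [sum_add_single]
        omega
    · intro f g hf hg
      have hfg : SmoothS (f * g) := hf.mul hg
      have aux : ∀ M : List ((Fin 3 → ℕ) × (Fin 3 → ℕ)),
          SmoothS (M.map fun p => mderiv p.1 f * mderiv p.2 g).sum ∧
          pd i (M.map fun p => mderiv p.1 f * mderiv p.2 g).sum =
            ((M.map fun p => (p.1 + Pi.single i 1, p.2)).map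
              fun p => mderiv p.1 f * mderiv p.2 g).sum +
            ((M.map fun p => (p.1, p.2 + Pi.single i 1)).map
              fun p => mderiv p.1 f * mderiv p.2 g).sum := by
        intro M
        induction M with
        | nil =>
          refine ⟨contDiff_const, ?_⟩
          ext x
          simp [pd]
        | cons q M ihM =>
          have hq : SmoothS (mderiv q.1 f * mderiv q.2 g) :=
            (mderiv_smooth q.1 hf).mul (mderiv_smooth q.2 hg)
          simp only [List.map_cons, List.sum_cons]
          refine ⟨hq.add ihM.1, ?_⟩
          rw [pd_add i hq ihM.1, ihM.2, pd_mul i (mderiv_smooth q.1 hf) (mderiv_smooth q.2 hg),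
            mderiv_succ _ _ hf, mderiv_succ _ _ hg]
          abel
      have hfa : SmoothS (f * mderiv α g) := hf.mul (mderiv_smooth α hg)
      rw [mderiv_succ _ _ hfg, hE f g hf hg,
        pd_add i hfa (aux L).1, (aux L).2,
        pd_mul i hf (mderiv_smooth α hg), mderiv_succ _ _ hg]
      have e1 : mderiv (Pi.single i 1) f = pd i f := by
        have := mderiv_succ 0 i hf
        rwa [zero_add, mderiv_zero] at this
      simp only [List.cons_append, List.map_cons, List.sum_cons, List.map_append, List.sum_append,
        e1]
      abel

/-! ### Anisotropic Sobolev product estimate -/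

/-- Truncated square of a scalar field. -/
noncomputable def phq (f : SF) : Pt → ℝ≥0∞ := Q3.indicator fun x => ENNReal.ofReal (f x ^ 2)

/-- Pointwise sum of the squares of all derivatives of order at most `m`. -/
noncomputable def psq (m : ℕ) (f : SF) : Pt → ℝ≥0∞ := fun x => ∑ γ ∈ midx m, phq (mderiv γ f) x

theorem measQ3 : MeasurableSet Q3 := MeasurableSet.univ_pi fun _ => measurableSet_Icc

theorem phq_meas {f : SF} (hf : Continuous f) : Measurable (phq f) := by
  apply Measurable.indicator _ measQ3
  exact (hf.pow 2).measurable.ennreal_ofReal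

theorem psq_meas (m : ℕ) {f : SF} (hf : SmoothS f) : Measurable (psq m f) :=
  Finset.measurable_sum _ fun γ _ => phq_meas (mderiv_smooth γ hf).continuous

theorem mem_midx {m : ℕ} {α : Fin 3 → ℕ} (h : ∑ j, α j ≤ m) : α ∈ midx m := by
  unfold midx
  simp only [Finset.mem_filter, Fintype.mem_piFinset, Finset.mem_range]
  refine ⟨fun i => ?_, h⟩
  have := Finset.single_le_sum (f := α) (fun _ _ => Nat.zero_le _) (Finset.mem_univ i)
  omega

theorem phq_le_psq {m : ℕ} {α : Fin 3 → ℕ} (h : ∑ j, α j ≤ m) (f : SF) :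
    phq (mderiv α f) ≤ psq m f := by
  intro x
  exact Finset.single_le_sum (f := fun γ => phq (mderiv γ f) x) (fun _ _ => zero_le)
    (mem_midx h)

theorem phq_step (i : Fin 3) {f : SF} (hf : SmoothS f) (x : Pt) :
    phq f x ≤ 2 * ∫⁻ t, (phq f (Function.update x i t) + phq (pd i f) (Function.update x i t)) := by
  by_cases hx : x ∈ Q3
  swap
  · simp [phq, hx]
  have hxi : ∀ j, x j ∈ Set.Icc 0 (2 * π) := fun j => hx j (Set.mem_univ j)
  have hmem : ∀ t, Function.update x i t ∈ Q3 ↔ t ∈ Set.Icc 0 (2 * π) := by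
    intro t
    constructor
    · intro h
      have := h i (Set.mem_univ i)
      simpa using this
    · intro h j _
      by_cases hj : j = i
      · subst hj; simpa using h
      · simpa [hj] using hxi j
  have hder : ∀ t, HasDerivAt (fun t => f (Function.update x i t))
      (pd i f (Function.update x i t)) t := by
    intro t
    have h1 : HasFDerivAt f (fderiv ℝ f (Function.update x i t)) (Function.update x i t) :=
      (hf.differentiable (by simp) _).hasFDerivAt
    exact h1.comp_hasDerivAt t (hasDerivAt_update x i t)
  have hcu : Continuous fun t => Function.update x i t := continuous_const.update i continuous_id
  have hc0 : Continuous fun t => f (Function.update x i t) := hf.continuous.comp hcu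
  have hc1 : Continuous fun t => pd i f (Function.update x i t) :=
    (pd_smooth i hf).continuous.comp hcu
  have h1 := sob1d _ _ hder hc1 (x i) (hxi i)
  simp only [Function.update_eq_self] at h1
  have e : ∀ t, phq f (Function.update x i t) + phq (pd i f) (Function.update x i t) =
      (Set.Icc 0 (2 * π)).indicator (fun t => ENNReal.ofReal (f (Function.update x i t) ^ 2
        + pd i f (Function.update x i t) ^ 2)) t := by
    intro t
    by_cases ht : t ∈ Set.Icc 0 (2 * π)
    · rw [Set.indicator_of_mem ht, ENNReal.ofReal_add (by positivity) (by positivity)]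
      simp only [phq, Set.indicator_of_mem ((hmem t).2 ht)]
    · have : Function.update x i t ∉ Q3 := fun h => ht ((hmem t).1 h)
      rw [Set.indicator_of_notMem ht]
      simp only [phq, Set.indicator_of_notMem this, add_zero]
  simp_rw [e]
  rw [lintegral_indicator measurableSet_Icc, ← ofReal_integral_eq_lintegral_ofReal]
  · rw [phq, Set.indicator_of_mem hx, integral_Icc_eq_integral_Ioc,
      ← intervalIntegral.integral_of_le (by positivity)]
    rw [show (2 : ℝ≥0∞) = ENNReal.ofReal 2 by simp, ← ENNReal.ofReal_mul (by norm_num)]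
    exact ENNReal.ofReal_le_ofReal h1
  · exact ((hc0.pow 2).add (hc1.pow 2)).integrableOn_Icc
  · exact Filter.Eventually.of_forall fun t => by positivity

/-- The product Lebesgue measure family. -/
noncomputable abbrev vol3 : Fin 3 → Measure ℝ := fun _ => volume

theorem phq_marginal (S : Finset (Fin 3)) (m : ℕ) {f : SF} (hf : SmoothS f) :
    ∀ β : Fin 3 → ℕ, (∑ j, β j) + S.card ≤ m →
      ∀ x, phq (mderiv β f) x ≤ 4 ^ S.card * lmarginal vol3 S (psq m f) x := by
  induction S using Finset.induction with
  | empty =>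
    intro β hβ x
    simp only [lmarginal_empty, Finset.card_empty, pow_zero, one_mul]
    exact phq_le_psq (by simpa using hβ) f x
  | insert i S hi ih =>
    intro β hβ x
    rw [Finset.card_insert_of_notMem hi] at hβ ⊢
    have hs := mderiv_smooth β hf
    refine (phq_step i hs x).trans ?_
    rw [lmarginal_insert _ (psq_meas m hf) hi, ← mderiv_succ _ _ hf]
    calc 2 * ∫⁻ t, (phq (mderiv β f) (Function.update x i t)
            + phq (mderiv (β + Pi.single i 1) f) (Function.update x i t))
        ≤ 2 * ∫⁻ t, (2 * 4 ^ S.card) * lmarginal vol3 S (psq m f) (Function.update x i t) := by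
          gcongr with t
          rw [mul_assoc, two_mul]
          apply add_le_add
          · exact ih β (by omega) _
          · exact ih _ (by rw [sum_add_single]; omega) _
      _ = 4 ^ (S.card + 1) * ∫⁻ t, lmarginal vol3 S (psq m f) (Function.update x i t) := by
          rw [lintegral_const_mul' _ _ (by finiteness), ← mul_assoc]
          congr 1
          rw [pow_succ, ← mul_assoc, mul_comm]
          congr 1
          norm_num

theorem lint_marginal_mul (S : Finset (Fin 3)) {F G : Pt → ℝ≥0∞} (hF : Measurable F)
    (hG : Measurable G) :
    ∫⁻ x, lmarginal vol3 S F x * lmarginal vol3 Sᶜ G x = (∫⁻ x, F x) * ∫⁻ x, G x := by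
  have hMF : Measurable (lmarginal vol3 S F) := hF.lmarginal _
  have hMG : Measurable (lmarginal vol3 Sᶜ G) := hG.lmarginal _
  have huniv : ∀ {H : Pt → ℝ≥0∞} (x : Pt), ∫⁻ y, H y = lmarginal vol3 Finset.univ H x := by
    intro H x
    exact lintegral_eq_lmarginal_univ (μ := vol3) x
  have hS : S ∪ Sᶜ = Finset.univ := Finset.union_compl S
  have hd : Disjoint S Sᶜ := disjoint_compl_right
  have x0 : Pt := 0
  have h1 : lmarginal vol3 S (fun x => lmarginal vol3 S F x * lmarginal vol3 Sᶜ G x)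
      = fun x => lmarginal vol3 S F x * ∫⁻ y, G y := by
    ext x
    rw [huniv x, ← hS, lmarginal_union vol3 G hG hd]
    conv_lhs => rw [lmarginal]
    conv_rhs => rw [lmarginal.eq_1 vol3 S (lmarginal vol3 Sᶜ G)]
    rw [← lintegral_const_mul]
    · congr 1
      ext y
      congr 1
      apply lmarginal_congr
      intro i hi
      simp [Function.updateFinset, hi]
    · exact hMG.comp measurable_updateFinset
  have h1' : lmarginal vol3 S (lmarginal vol3 S F * lmarginal vol3 Sᶜ G)
      = fun x => lmarginal vol3 S F x * ∫⁻ y, G y := h1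
  change ∫⁻ x, (lmarginal vol3 S F * lmarginal vol3 Sᶜ G) x = _
  rw [huniv x0, ← hS, lmarginal_union' vol3 _ (hMF.mul hMG) hd]
  rw [h1', huniv (H := F) x0, ← hS, lmarginal_union' vol3 F hF hd]
  conv_lhs => rw [lmarginal]
  conv_rhs => rw [lmarginal]
  rw [lintegral_mul_const]
  exact hMF.comp measurable_updateFinset

theorem phq_mul (f g : SF) (x : Pt) : phq (f * g) x = phq f x * phq g x := by
  by_cases hx : x ∈ Q3
  · simp only [phq, Set.indicator_of_mem hx, Pi.mul_apply]
    rw [mul_pow, ENNReal.ofReal_mul (by positivity)]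
  · simp [phq, hx]

theorem phq_add (f g : SF) (x : Pt) : phq (f + g) x ≤ 2 * phq f x + 2 * phq g x := by
  by_cases hx : x ∈ Q3
  · simp only [phq, Set.indicator_of_mem hx, Pi.add_apply]
    rw [show (2 : ℝ≥0∞) = ENNReal.ofReal 2 by simp, ← ENNReal.ofReal_mul (by norm_num),
      ← ENNReal.ofReal_mul (by norm_num), ← ENNReal.ofReal_add (by positivity) (by positivity)]
    apply ENNReal.ofReal_le_ofReal
    nlinarith [sq_nonneg (f x - g x)]
  · simp [phq, hx]

theorem lint_add {f : SF} (g : SF) (hf : Continuous f) :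
    ∫⁻ x, phq (f + g) x ≤ 2 * (∫⁻ x, phq f x) + 2 * ∫⁻ x, phq g x := by
  calc ∫⁻ x, phq (f + g) x ≤ ∫⁻ x, (2 * phq f x + 2 * phq g x) := lintegral_mono (phq_add f g)
    _ = _ := by
      rw [lintegral_add_left ((phq_meas hf).const_mul 2), lintegral_const_mul' _ _ (by simp),
        lintegral_const_mul' _ _ (by simp)]

theorem product_est (s : ℕ) (hs : 4 ≤ s) {f g : SF} (hf : SmoothS f) (hg : SmoothS g)
    (β γ : Fin 3 → ℕ) (hβ : ∑ j, β j ≤ s) (hγ : ∑ j, γ j ≤ s)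
    (hsum : (∑ j, β j) + ∑ j, γ j ≤ s + 1) :
    ∫⁻ x, phq (mderiv β f * mderiv γ g) x ≤ 64 * ((∫⁻ x, psq s f x) * ∫⁻ x, psq s g x) := by
  obtain ⟨S, hS1, hS2⟩ : ∃ S : Finset (Fin 3), (∑ j, β j) + S.card ≤ s ∧
      (∑ j, γ j) + Sᶜ.card ≤ s := by
    obtain ⟨S, -, hS⟩ := Finset.exists_subset_card_eq
      (s := (Finset.univ : Finset (Fin 3))) (n := min 3 (s - ∑ j, β j)) (by simp)
    refine ⟨S, by omega, ?_⟩
    rw [Finset.card_compl, Fintype.card_fin]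
    omega
  have hcard : S.card + Sᶜ.card = 3 := by simp [Finset.card_add_card_compl]
  calc ∫⁻ x, phq (mderiv β f * mderiv γ g) x
      ≤ ∫⁻ x, 64 * (lmarginal vol3 S (psq s f) x * lmarginal vol3 Sᶜ (psq s g) x) := by
        apply lintegral_mono
        intro x
        rw [phq_mul]
        refine (mul_le_mul' (phq_marginal S s hf β hS1 x)
          (phq_marginal Sᶜ s hg γ hS2 x)).trans (le_of_eq ?_)
        rw [show (64 : ℝ≥0∞) = 4 ^ S.card * 4 ^ Sᶜ.card by rw [← pow_add, hcard]; norm_num]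
        ring
    _ = _ := by
        rw [lintegral_const_mul' _ _ (by simp),
          lint_marginal_mul S (psq_meas s hf) (psq_meas s hg)]

/-! ### Norms and final estimates -/

theorem L2_sq (f : SF) : L2 f ^ 2 = ∫ x in Q3, f x ^ 2 := by
  unfold L2
  rw [← Real.sqrt_eq_rpow, Real.sq_sqrt]
  exact integral_nonneg fun x => sq_nonneg _

theorem HsNorm_sq (s : ℕ) (f : SF) : HsNorm s f ^ 2 = ∑ α ∈ midx s, L2 (mderiv α f) ^ 2 := by
  unfold HsNorm
  rw [← Real.sqrt_eq_rpow, Real.sq_sqrt]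
  exact Finset.sum_nonneg fun x _ => sq_nonneg _

theorem HsNorm_nonneg (s : ℕ) (f : SF) : 0 ≤ HsNorm s f := by
  unfold HsNorm
  positivity

theorem HsNormV_sq (s : ℕ) (v : VF) : HsNormV s v ^ 2 = ∑ i, HsNorm s (v i) ^ 2 := by
  unfold HsNormV
  rw [← Real.sqrt_eq_rpow, Real.sq_sqrt]
  exact Finset.sum_nonneg fun x _ => sq_nonneg _

theorem lint_phq {f : SF} (hf : Continuous f) : ∫⁻ x, phq f x = ENNReal.ofReal (L2 f ^ 2) := by
  unfold phq
  rw [L2_sq, lintegral_indicator measQ3, ofReal_integral_eq_lintegral_ofReal]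
  · have hK : IsCompact Q3 := isCompact_univ_pi fun _ => isCompact_Icc
    exact (hf.pow 2).continuousOn.integrableOn_compact hK
  · exact Filter.Eventually.of_forall fun t => sq_nonneg _

theorem lint_psq (s : ℕ) {f : SF} (hf : SmoothS f) :
    ∫⁻ x, psq s f x = ENNReal.ofReal (HsNorm s f ^ 2) := by
  unfold psq
  rw [HsNorm_sq, lintegral_finsetSum _ fun γ _ => phq_meas (mderiv_smooth γ hf).continuous,
    ENNReal.ofReal_sum_of_nonneg fun _ _ => sq_nonneg _]
  exact Finset.sum_congr rfl fun γ _ => lint_phq (mderiv_smooth γ hf).continuous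

theorem lint_psq_add (s : ℕ) {f g : SF} (hf : SmoothS f) (hg : SmoothS g) :
    ∫⁻ x, psq s (f + g) x ≤ 2 * (∫⁻ x, psq s f x) + 2 * ∫⁻ x, psq s g x := by
  rw [← lintegral_const_mul' _ _ (by simp), ← lintegral_const_mul' _ _ (by simp),
    ← lintegral_add_left ((psq_meas s hf).const_mul 2)]
  apply lintegral_mono
  intro x
  simp only [psq]
  rw [Finset.mul_sum, Finset.mul_sum, ← Finset.sum_add_distrib]
  apply Finset.sum_le_sum
  intro γ _
  rw [mderiv_add γ hf hg]
  exact phq_add _ _ x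

theorem divv_eq (U : VF) : divv U = pd 0 (U 0) + pd 1 (U 1) + pd 2 (U 2) := by
  ext x
  simp [divv, Fin.sum_univ_three]

theorem divv_smooth {U : VF} (hU : SmoothV U) : SmoothS (divv U) := by
  rw [divv_eq]
  exact ((pd_smooth 0 (hU 0)).add (pd_smooth 1 (hU 1))).add (pd_smooth 2 (hU 2))

theorem mderiv_divv (γ : Fin 3 → ℕ) {U : VF} (hU : SmoothV U) :
    mderiv γ (divv U) = mderiv (γ + Pi.single 0 1) (U 0) + mderiv (γ + Pi.single 1 1) (U 1)
      + mderiv (γ + Pi.single 2 1) (U 2) := by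
  have h01 : SmoothS (pd 0 (U 0) + pd 1 (U 1)) :=
    ContDiff.add (pd_smooth 0 (hU 0)) (pd_smooth 1 (hU 1))
  rw [divv_eq, mderiv_add γ h01 (pd_smooth 2 (hU 2)),
    mderiv_add γ (pd_smooth 0 (hU 0)) (pd_smooth 1 (hU 1)),
    mderiv_pd _ _ (hU 0), mderiv_pd _ _ (hU 1), mderiv_pd _ _ (hU 2)]

theorem term_est (s : ℕ) (hs : 4 ≤ s) {f : SF} {U : VF} (hf : SmoothS f) (hU : SmoothV U)
    (β γ : Fin 3 → ℕ) (hβ : 1 ≤ ∑ j, β j) (hsum : (∑ j, β j) + ∑ j, γ j ≤ s) :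
    ∫⁻ x, phq (mderiv β f * mderiv γ (divv U)) x
      ≤ 768 * ((∫⁻ x, psq s f x) * ENNReal.ofReal (HsNormV s U ^ 2)) := by
  have hi : ∀ i, ∫⁻ x, phq (mderiv β f * mderiv (γ + Pi.single i 1) (U i)) x
      ≤ 64 * ((∫⁻ x, psq s f x) * ENNReal.ofReal (HsNormV s U ^ 2)) := by
    intro i
    refine (product_est s hs hf (hU i) β (γ + Pi.single i 1) (by omega)
      (by rw [sum_add_single]; omega) (by rw [sum_add_single]; omega)).trans ?_
    rw [lint_psq s (hU i)]
    gcongr 64 * (_ * ?_)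
    apply ENNReal.ofReal_le_ofReal
    rw [HsNormV_sq]
    exact Finset.single_le_sum (f := fun i => HsNorm s (U i) ^ 2) (fun _ _ => sq_nonneg _)
      (Finset.mem_univ i)
  have hcont : ∀ i, Continuous (mderiv β f * mderiv (γ + Pi.single i 1) (U i)) := fun i =>
    (mderiv_smooth β hf).continuous.mul (mderiv_smooth _ (hU i)).continuous
  rw [mderiv_divv γ hU, mul_add, mul_add]
  set T := (∫⁻ x, psq s f x) * ENNReal.ofReal (HsNormV s U ^ 2) with hT
  calc _ ≤ _ := lint_add _ ((hcont 0).add (hcont 1))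
    _ ≤ 2 * (2 * (64 * T) + 2 * (64 * T)) + 2 * (64 * T) := by
        gcongr
        · refine (lint_add _ (hcont 0)).trans ?_
          gcongr
          · exact hi 0
          · exact hi 1
        · exact hi 2
    _ = 640 * T := by ring
    _ ≤ 768 * T := by gcongr; norm_num

theorem list_est (s : ℕ) (hs : 4 ≤ s) (L : List ((Fin 3 → ℕ) × (Fin 3 → ℕ)))
    (hL : ∀ p ∈ L, 1 ≤ ∑ j, p.1 j ∧ (∑ j, p.1 j) + ∑ j, p.2 j ≤ s) :
    ∃ C : NNReal, ∀ (f : SF) (U : VF), SmoothS f → SmoothV U →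
      Continuous (L.map fun p => mderiv p.1 f * mderiv p.2 (divv U)).sum ∧
      ∫⁻ x, phq (L.map fun p => mderiv p.1 f * mderiv p.2 (divv U)).sum x
        ≤ C * ((∫⁻ x, psq s f x) * ENNReal.ofReal (HsNormV s U ^ 2)) := by
  induction L with
  | nil =>
    refine ⟨0, fun f U _ _ => ⟨continuous_const, ?_⟩⟩
    simp [phq]
  | cons p L ih =>
    obtain ⟨C, hC⟩ := ih fun q hq => hL q (List.mem_cons_of_mem _ hq)
    refine ⟨2 * 768 + 2 * C, fun f U hf hU => ?_⟩
    obtain ⟨h1, h2⟩ := hC f U hf hU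
    have hp := hL p List.mem_cons_self
    have hcp : Continuous (mderiv p.1 f * mderiv p.2 (divv U)) :=
      (mderiv_smooth _ hf).continuous.mul (mderiv_smooth _ (divv_smooth hU)).continuous
    simp only [List.map_cons, List.sum_cons]
    refine ⟨hcp.add h1, (lint_add _ hcp).trans ?_⟩
    have h3 := term_est s hs hf hU p.1 p.2 hp.1 hp.2
    set T := (∫⁻ x, psq s f x) * ENNReal.ofReal (HsNormV s U ^ 2) with hT
    calc _ ≤ 2 * (768 * T) + 2 * (C * T) := by gcongr
      _ = _ := by push_cast; ring

theorem HsNormV_nonneg (s : ℕ) (v : VF) : 0 ≤ HsNormV s v := by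
  unfold HsNormV
  apply Real.rpow_nonneg
  exact Finset.sum_nonneg fun x _ => sq_nonneg _

theorem final_arith (l C K n u : ℝ) (hC0 : 0 ≤ C) (hn0 : 0 ≤ n) (hu0 : 0 ≤ u)
    (h1 : l ^ 2 ≤ C * ((2 * n ^ 2 + 2 * K ^ 2) * u ^ 2)) :
    l ≤ (2 * (C + 1) * (1 + K ^ 2) + 1) * ((n + u) ^ 2 + (n + u)) := by
  apply le_of_sq_le_sq ?_ (by positivity)
  refine h1.trans ?_
  have hX : (n ^ 2 + K ^ 2) * u ^ 2 ≤ (1 + K ^ 2) * ((n + u) ^ 2 + (n + u)) ^ 2 := by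
    have a1 : n * u ≤ (n + u) ^ 2 + (n + u) := by nlinarith
    have a2 : u ≤ (n + u) ^ 2 + (n + u) := by nlinarith
    have b1 := pow_le_pow_left₀ (by positivity) a1 2
    have b2 := pow_le_pow_left₀ hu0 a2 2
    nlinarith [mul_le_mul_of_nonneg_left b2 (sq_nonneg K)]
  set Y := ((n + u) ^ 2 + (n + u)) with hY
  have hM : 2 * C * (1 + K ^ 2) ≤ (2 * (C + 1) * (1 + K ^ 2) + 1) ^ 2 := by
    have : 0 ≤ C * K ^ 2 := by positivity
    have hA : (0 : ℝ) ≤ 2 * (C + 1) * (1 + K ^ 2) := by positivity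
    have hB : 2 * C * (1 + K ^ 2) ≤ 2 * (C + 1) * (1 + K ^ 2) := by
      gcongr
      linarith
    generalize 2 * (C + 1) * (1 + K ^ 2) = A at hA hB ⊢
    nlinarith
  calc C * ((2 * n ^ 2 + 2 * K ^ 2) * u ^ 2) = 2 * C * ((n ^ 2 + K ^ 2) * u ^ 2) := by ring
    _ ≤ 2 * C * ((1 + K ^ 2) * Y ^ 2) := by gcongr
    _ = (2 * C * (1 + K ^ 2)) * Y ^ 2 := by ring
    _ ≤ (2 * (C + 1) * (1 + K ^ 2) + 1) ^ 2 * Y ^ 2 := by gcongr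
    _ = _ := by ring

/-- Moser-type commutator estimate for the divergence term.
Let `s > 7/2` be an integer and `|α| ≤ s`. There is a constant `C`, depending only
on `s` (and `α`) and an upper bound `K` for `‖ρ⁰‖_{H^s}`, such that for all periodic
`N, U` of Sobolev class `H^s` (here taken smooth):
`‖∂^α((N+ρ⁰)div U) − (N+ρ⁰)∂^α div U‖_{L²} ≤ C(‖(N,U)‖²_{H^s} + ‖(N,U)‖_{H^s})`. -/
theorem commutator_divergence (s : ℕ) (hs : 7/2 < (s:ℝ)) (α : Fin 3 → ℕ)
    (hα : (∑ i, α i) ≤ s) (K : ℝ) :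
    ∃ C > (0:ℝ), ∀ ρ0 : SF, SmoothS ρ0 → PerS ρ0 → HsNorm s ρ0 ≤ K →
      ∀ (N : SF) (U : VF), SmoothS N → PerS N → SmoothV U → PerV U →
        L2 (fun x => mderiv α (fun y => (N y + ρ0 y) * divv U y) x
              - (N x + ρ0 x) * mderiv α (divv U) x)
          ≤ C * ((HsNorm s N + HsNormV s U) ^ 2 + (HsNorm s N + HsNormV s U)) := by
  have hs4 : 4 ≤ s := by
    by_contra! hlt
    have h3 : (s : ℝ) ≤ 3 := by exact_mod_cast Nat.lt_succ_iff.1 hlt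
    linarith
  obtain ⟨L, hL, hE⟩ := leibniz α
  obtain ⟨C, hC⟩ := list_est s hs4 L (fun p hp => by
    have := hL p hp
    omega)
  refine ⟨2 * (C + 1) * (1 + K ^ 2) + 1, by positivity, ?_⟩
  intro ρ0 hρ0 _ hK N U hN _ hU _
  have hf : SmoothS (N + ρ0) := ContDiff.add hN hρ0
  have hg : SmoothS (divv U) := divv_smooth hU
  have e : (fun x => mderiv α (fun y => (N y + ρ0 y) * divv U y) x
              - (N x + ρ0 x) * mderiv α (divv U) x)
      = (L.map fun p => mderiv p.1 (N + ρ0) * mderiv p.2 (divv U)).sum := by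
    have h1 : (fun y => (N y + ρ0 y) * divv U y) = (N + ρ0) * divv U := rfl
    have h2 := hE (N + ρ0) (divv U) hf hg
    ext x
    rw [h1, h2]
    simp only [Pi.add_apply, Pi.mul_apply]
    ring
  rw [e]
  obtain ⟨hcont, hest⟩ := hC (N + ρ0) U hf hU
  rw [lint_phq hcont] at hest
  have hA : ∫⁻ x, psq s (N + ρ0) x ≤ ENNReal.ofReal (2 * HsNorm s N ^ 2 + 2 * K ^ 2) := by
    refine (lint_psq_add s hN hρ0).trans ?_
    rw [lint_psq s hN, lint_psq s hρ0, ENNReal.ofReal_add (by positivity) (by positivity),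
      ENNReal.ofReal_mul (by norm_num), ENNReal.ofReal_mul (by norm_num)]
    simp only [ENNReal.ofReal_ofNat]
    have : HsNorm s ρ0 ^ 2 ≤ K ^ 2 := pow_le_pow_left₀ (HsNorm_nonneg s ρ0) hK 2
    gcongr
  have h1 : ENNReal.ofReal (L2 (L.map fun p => mderiv p.1 (N + ρ0) * mderiv p.2 (divv U)).sum ^ 2)
      ≤ ENNReal.ofReal (C * ((2 * HsNorm s N ^ 2 + 2 * K ^ 2) * HsNormV s U ^ 2)) := by
    refine hest.trans ?_
    rw [ENNReal.ofReal_mul (by positivity), ENNReal.ofReal_mul (by positivity),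
      ENNReal.ofReal_coe_nnreal]
    gcongr
  rw [ENNReal.ofReal_le_ofReal_iff (by positivity)] at h1
  exact final_arith _ _ _ _ _ C.2 (HsNorm_nonneg s N) (HsNormV_nonneg s U) h1
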